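/- Let A > 0, k > 0, α > 1. There exist r > 0 and ω₀ > 0 such that for every ω > ω₀, every solution X = (x, v_x, y, v_y) : [0,∞) → ℝ⁴ of the system ẋ = v_x, v̇_x = A(x − cos ωt)/[(x − cos ωt)² + (y − sin ωt)²]^α − k v_x, ẏ = v_y, v̇_y = A(y − sin ωt)/[(x − cos ωt)² + (y − sin ωt)²]^α − k v_y, with ‖X(0)‖ ≤ r, is defined for all t ≥ 0 and satisfies ‖(x(t), y(t))‖ < 1 for all t ≥ 0; that is, a leader traversing the unit circle at sufficiently high angular frequency ω confines the follower near the origin for infinite time. -/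

import Mathlib

open Real Set

lemma glob_exist {E : Type*} [NormedAddCommGroup E] [NormedSpace ℝ E] [CompleteSpace E]
    (f : ℝ → E → E) (K L : NNReal) (hK : ∀ t, LipschitzWith K (f t))
    (hc : ∀ x, Continuous (fun t => f t x)) (hL : ∀ t x, ‖f t x‖ ≤ L) (x0 : E) :
    ∃ γ : ℝ → E, γ 0 = x0 ∧ ∀ t, HasDerivAt γ (f t (γ t)) t := by
  have h1 : ∀ n : ℕ, ∃ γ : ℝ → E, γ 0 = x0 ∧
      ∀ t ∈ Ioo (-(n+1:ℝ)) (n+1:ℝ), HasDerivAt γ (f t (γ t)) t := by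
    intro n
    have hn : (0:ℝ) ≤ n := Nat.cast_nonneg n
    have hp : IsPicardLindelof f (tmin := -(n+1:ℝ)) (tmax := (n+1:ℝ))
        ⟨0, by constructor <;> linarith⟩ x0 (L * (n+1)) 0 L K :=
      { lipschitzOnWith := fun t _ => (hK t).lipschitzOnWith
        continuousOn := fun x _ => (hc x).continuousOn
        norm_le := fun t _ x _ => hL t x
        mul_max_le := by simp }
    obtain ⟨γ, h0, h⟩ := hp.exists_eq_forall_mem_Icc_hasDerivWithinAt₀
    exact ⟨γ, h0, fun t ht => (h t (Ioo_subset_Icc_self ht)).hasDerivAt (Icc_mem_nhds ht.1 ht.2)⟩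
  choose g g0 hg using h1
  have huniq : ∀ m n : ℕ, m ≤ n → EqOn (g m) (g n) (Ioo (-(m+1:ℝ)) (m+1:ℝ)) := by
    intro m n hmn
    have hm : (0:ℝ) ≤ m := Nat.cast_nonneg m
    have hmn' : (m:ℝ) ≤ n := by exact_mod_cast hmn
    refine ODE_solution_unique_of_mem_Ioo (v := f) (s := fun _ => univ) (K := K) (t₀ := 0)
      (fun t _ => (hK t).lipschitzOnWith) ⟨by linarith, by linarith⟩
      (fun t ht => ⟨hg m t ht, trivial⟩)
      (fun t ht => ⟨hg n t ⟨by linarith [ht.1], by linarith [ht.2]⟩, trivial⟩) ?_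
    rw [g0, g0]
  refine ⟨fun t => g ⌈|t|⌉₊ t, by simp [g0], fun t => ?_⟩
  set N := ⌈|t|⌉₊ with hN
  have hN1 : |t| ≤ N := Nat.le_ceil _
  have ht : t ∈ Ioo (-(N+1:ℝ)) (N+1:ℝ) := by
    have := abs_le.1 hN1
    constructor <;> linarith
  refine (hg N t ht).congr_of_eventuallyEq ?_
  filter_upwards [Ioo_mem_nhds ht.1 ht.2] with s hs
  have hs1 : |s| ≤ ⌈|s|⌉₊ := Nat.le_ceil _
  have hs2 : s ∈ Ioo (-((⌈|s|⌉₊:ℝ)+1)) (⌈|s|⌉₊+1:ℝ) := by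
    have := abs_le.1 hs1
    constructor <;> linarith
  rcases le_total ⌈|s|⌉₊ N with h | h
  · exact huniq _ _ h hs2
  · exact (huniq _ _ h hs).symm

lemma rpow_bd (p : ℝ) (hp : 0 < p) (s : ℝ) (hs : 1/4 ≤ s) :
    |s ^ (-p)| ≤ (1/4:ℝ) ^ (-p) := by
  rw [abs_of_nonneg (by positivity)]
  exact Real.rpow_le_rpow_of_nonpos (by norm_num) hs (by linarith)

lemma rpow_lip (p : ℝ) (hp : 0 < p) : ∃ L : ℝ, 0 ≤ L ∧ ∀ s t : ℝ, 1/4 ≤ s → 1/4 ≤ t →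
    |s ^ (-p) - t ^ (-p)| ≤ L * |s - t| := by
  refine ⟨p * (1/4:ℝ) ^ (-(p+1)), by positivity, fun s t hs ht => ?_⟩
  have := Convex.norm_image_sub_le_of_norm_hasDerivWithin_le (s := Ici (1/4:ℝ))
    (f := fun x => x ^ (-p)) (f' := fun x => -p * x ^ (-p-1)) (C := p * (1/4:ℝ) ^ (-(p+1)))
    (x := t) (y := s) ?_ ?_ (convex_Ici _) ht hs
  · simpa using this
  · intro x hx
    have : (1/4:ℝ) ≤ x := hx
    exact (Real.hasDerivAt_rpow_const (Or.inl (by linarith))).hasDerivWithinAt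
  · intro x hx
    have h := rpow_bd (p+1) (by linarith) x hx
    have e : -p - 1 = -(p+1) := by ring
    rw [Real.norm_eq_abs, abs_mul, abs_neg, abs_of_pos hp, e]
    gcongr

lemma rpow_taylor (p : ℝ) (hp : 0 < p) : ∃ L : ℝ, 0 ≤ L ∧ ∀ s : ℝ, 1/4 ≤ s →
    |s ^ (-p) - 1 + p * (s - 1)| ≤ L * (s - 1)^2 := by
  obtain ⟨L, hL, h⟩ := rpow_lip (p+1) (by linarith)
  refine ⟨p * L, by positivity, fun s hs => ?_⟩
  have hsub : ∀ x ∈ uIcc 1 s, 1/4 ≤ x := by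
    intro x hx
    rw [mem_uIcc] at hx
    rcases hx with hx | hx <;> linarith [hx.1]
  have := Convex.norm_image_sub_le_of_norm_hasDerivWithin_le (s := uIcc 1 s)
    (f := fun x => x ^ (-p) - 1 + p * (x - 1)) (f' := fun x => -p * x ^ (-p-1) + p * 1)
    (C := p * L * |s - 1|)
    (x := 1) (y := s) ?_ ?_ (convex_uIcc _ _) left_mem_uIcc right_mem_uIcc
  · simp only [Real.norm_eq_abs, Real.one_rpow, sub_self, mul_zero, add_zero, sub_zero] at this
    rwa [mul_assoc, abs_mul_abs_self, ← pow_two] at this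
  · intro x hx
    have h1 := hsub x hx
    refine (HasDerivAt.add ?_ ?_).hasDerivWithinAt
    · exact (Real.hasDerivAt_rpow_const (Or.inl (by linarith))).sub_const 1
    · exact ((hasDerivAt_id x).sub_const 1).const_mul p
  · intro x hx
    have h1 := hsub x hx
    have h2 := h x 1 h1 (by norm_num)
    have e : -p * x ^ (-p-1) + p * 1 = -p * (x ^ (-(p+1)) - 1 ^ (-(p+1))) := by
      rw [Real.one_rpow, show -p - 1 = -(p+1) by ring]; ring
    rw [Real.norm_eq_abs, e, abs_mul, abs_neg, abs_of_pos hp, mul_assoc]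
    have h3 : |x - 1| ≤ |s - 1| := abs_sub_left_of_mem_uIcc hx
    gcongr
    exact h2.trans (by gcongr)

lemma denom_lb (x y c s : ℝ) (hx : |x| ≤ 1/4) (hy : |y| ≤ 1/4) (hcs : c^2+s^2=1) :
    1/4 ≤ (x-c)^2+(y-s)^2 := by
  have hx2 : x^2 ≤ (1/4)^2 := sq_le_sq' (abs_le.1 hx).1 (abs_le.1 hx).2
  have hy2 : y^2 ≤ (1/4)^2 := sq_le_sq' (abs_le.1 hy).1 (abs_le.1 hy).2
  have h1 : (x*c+y*s)^2 ≤ 1/8 := by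
    have : (x*c+y*s)^2 = (x^2+y^2)*(c^2+s^2) - (x*s-y*c)^2 := by ring
    rw [this, hcs]; nlinarith [sq_nonneg (x*s-y*c)]
  have h2 : x*c+y*s ≤ 3/8 := by nlinarith
  nlinarith [sq_nonneg x, sq_nonneg y]

lemma mul_bd {a b x y : ℝ} (h1 : |a| ≤ x) (h2 : |b| ≤ y) : |a * b| ≤ x * y := by
  rw [abs_mul]; exact mul_le_mul h1 h2 (abs_nonneg _) ((abs_nonneg _).trans h1)

lemma add_bd {a b x y : ℝ} (h1 : |a| ≤ x) (h2 : |b| ≤ y) : |a + b| ≤ x + y :=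
  (abs_add_le a b).trans (add_le_add h1 h2)

lemma sub_bd {a b x y : ℝ} (h1 : |a| ≤ x) (h2 : |b| ≤ y) : |a - b| ≤ x + y :=
  (abs_sub a b).trans (add_le_add h1 h2)

lemma self_bd {a : ℝ} (h : 0 ≤ a) : |a| ≤ a := (abs_of_nonneg h).le

lemma decay_comp (k β δ M P Q u z p q : ℝ) (hk : 0 < k) (hβ : 0 < β)
    (hu : |u| ≤ δ) (hz : |z| ≤ M * δ) (hp : |p| ≤ P * δ^2) (hq : |q| ≤ Q * δ^2) :
    2*u*(-k*u-β*z+q) + 2*(u+k*z)*(-k*u-β*z+q+k*(u+p)) + 4*β*z*(u+p)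
      ≤ -2*k*(u^2+β*z^2) + (2*Q+2*(1+k*M)*(Q+k*P)+4*β*M*P) * δ^3 := by
  have h1 := le_of_abs_le (mul_bd hu hq)
  have h2 := le_of_abs_le (mul_bd (add_bd hu (mul_bd (self_bd hk.le) hz))
    (add_bd hq (mul_bd (self_bd hk.le) hp)))
  have h3 := le_of_abs_le (mul_bd (self_bd hβ.le) (mul_bd hz hp))
  nlinarith [h1, h2, h3]

lemma decay (k β δ M P Q u1 u2 z1 z2 p1 p2 q1 q2 : ℝ) (hk : 0 < k) (hβ : 0 < β) (hδ : 0 < δ)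
    (hu1 : |u1| ≤ δ) (hz1 : |z1| ≤ M * δ) (hp1 : |p1| ≤ P * δ^2) (hq1 : |q1| ≤ Q * δ^2)
    (hu2 : |u2| ≤ δ) (hz2 : |z2| ≤ M * δ) (hp2 : |p2| ≤ P * δ^2) (hq2 : |q2| ≤ Q * δ^2)
    (hV : (u1^2+(u1+k*z1)^2+2*β*z1^2) + (u2^2+(u2+k*z2)^2+2*β*z2^2) = δ^2)
    (hT : (2*Q+2*(1+k*M)*(Q+k*P)+4*β*M*P) * (3+2*k^2/β) * δ < k) :
    (2*u1*(-k*u1-β*z1+q1) + 2*(u1+k*z1)*(-k*u1-β*z1+q1+k*(u1+p1)) + 4*β*z1*(u1+p1)) +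
    (2*u2*(-k*u2-β*z2+q2) + 2*(u2+k*z2)*(-k*u2-β*z2+q2+k*(u2+p2)) + 4*β*z2*(u2+p2)) < 0 := by
  have h1 := decay_comp k β δ M P Q u1 z1 p1 q1 hk hβ hu1 hz1 hp1 hq1
  have h2 := decay_comp k β δ M P Q u2 z2 p2 q2 hk hβ hu2 hz2 hp2 hq2
  set T := (2*Q+2*(1+k*M)*(Q+k*P)+4*β*M*P)
  set c := 3+2*k^2/β with hc
  have hcpos : 0 < c := by positivity
  have key : ∀ u z : ℝ, u^2+(u+k*z)^2+2*β*z^2 ≤ c * (u^2+β*z^2) := by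
    intro u z
    have e : c * (u^2+β*z^2) = 3*u^2 + 2*k^2*u^2/β + 3*β*z^2+2*k^2*z^2 := by
      rw [hc]; field_simp; ring
    have : 0 ≤ 2*k^2*u^2/β := by positivity
    have : 0 ≤ β*z^2 := by positivity
    rw [e]; nlinarith [sq_nonneg (u-k*z)]
  have h3 : δ^2 ≤ c * ((u1^2+β*z1^2) + (u2^2+β*z2^2)) := by
    rw [← hV]; linarith [key u1 z1, key u2 z2]
  have h4 : c * (2 * T * δ^3) < c * (2*k*((u1^2+β*z1^2) + (u2^2+β*z2^2))) := by
    have e1 : c * (2 * T * δ^3) = 2 * (T * c * δ) * δ^2 := by ring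
    have e2 : 2 * (T * c * δ) * δ^2 < 2 * k * δ^2 := by
      have : 0 < δ^2 := by positivity
      nlinarith
    nlinarith
  have h5 := lt_of_mul_lt_mul_left h4 hcpos.le
  linarith

lemma rem_bd (α L m x y c s H w e : ℝ) (hα : 0 < α) (hL : 0 ≤ L) (hm : m ≤ 1/4)
    (hx : |x| ≤ m) (hy : |y| ≤ m) (hc : |c| ≤ 1) (hs : |s| ≤ 1) (hcs : c^2+s^2=1)
    (hw : |w| ≤ m) (he : |e| ≤ 1)
    (hH : |H - 1 + α * ((x-c)^2+(y-s)^2 - 1)| ≤ L * ((x-c)^2+(y-s)^2 - 1)^2) :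
    |(w - e) * H - (w - e + 2*α*(x*c+y*s) * (-e))| ≤ (50*L+7*α)*m^2 := by
  have hm0 : 0 ≤ m := (abs_nonneg _).trans hx
  set η := (x-c)^2+(y-s)^2 - 1 with hη
  have e1 : η = -2*(x*c+y*s) + (x*x+y*y) := by rw [hη]; linear_combination hcs
  clear_value η
  have hη1 : |η| ≤ 5*m := by
    rw [e1]
    refine (add_bd (mul_bd (a := -2) (x := 2) (by norm_num) (add_bd (mul_bd hx hc) (mul_bd hy hs)))
      (add_bd (mul_bd hx hx) (mul_bd hy hy))).trans ?_
    nlinarith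
  have hη2 : η^2 ≤ (5*m)^2 := sq_le_sq' (abs_le.1 hη1).1 (abs_le.1 hη1).2
  have hρ : |H - 1 + α*η| ≤ L * (5*m)^2 := hH.trans (by gcongr)
  have e2 : (w - e) * H - (w - e + 2*α*(x*c+y*s) * (-e))
      = (w-e)*(H-1+α*η) - α*(η*w) + α*(e*(x*x+y*y)) := by
    have : 2*(x*c+y*s) = (x*x+y*y) - η := by linarith
    linear_combination (α*e) * this
  have hwe : |w - e| ≤ 2 := (sub_bd hw he).trans (by linarith)
  rw [e2]
  refine (add_bd (sub_bd (mul_bd hwe hρ) (mul_bd (self_bd hα.le) (mul_bd hη1 hw)))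
    (mul_bd (self_bd hα.le) (mul_bd he (add_bd (mul_bd hx hx) (mul_bd hy hy))))).trans ?_
  nlinarith

lemma p_bd (A α ε x y c S C : ℝ) (hA : 0 < A) (hα : 0 < α) (hε : 0 < ε)
    (hx : |x| ≤ 1) (hy : |y| ≤ 1) (hc : |c| ≤ 1) (hS : |S| ≤ 1) (hC : |C| ≤ 1) :
    |A*ε*c + (α*A*ε/2)*(S*x + C*y)| ≤ A*(1+α)*ε := by
  have h0 : 0 ≤ A*ε := by positivity
  have h1 : 0 ≤ α*A*ε/2 := by positivity
  refine (add_bd (mul_bd (self_bd h0) hc) (mul_bd (self_bd h1)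
    (add_bd (mul_bd hS hx) (mul_bd hC hy)))).trans ?_
  apply le_of_eq; ring

/-- Pointwise negativity of the derivative of the Lyapunov function. -/
lemma boundary (A k α L ε δ M P x y vx vy c s C S H : ℝ) (hA : 0 < A) (hk : 0 < k) (hα : 1 < α)
    (hL : 0 ≤ L) (hε : 0 < ε) (hεδ : ε ≤ δ^2) (hδ : 0 < δ) (hM : M * δ ≤ 1/4)
    (hP : P = A*(1+α))
    (hc : |c| ≤ 1) (hs : |s| ≤ 1) (hS : |S| ≤ 1) (hC : |C| ≤ 1) (hcs : c^2+s^2=1)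
    (hC2 : C = 2*c^2-1) (hS2 : S = 2*s*c)
    (hx : |x| ≤ M*δ) (hy : |y| ≤ M*δ) (hvx : |vx| ≤ 1) (hvy : |vy| ≤ 1)
    (hH : |H - 1 + α * ((x-c)^2+(y-s)^2 - 1)| ≤ L * ((x-c)^2+(y-s)^2 - 1)^2)
    (ux uy Q : ℝ) (hux : ux = vx + A*ε*s + (α*A*ε/2)*(S*x + (-C)*y))
    (huy : uy = vy + A*ε*(-c) + (α*A*ε/2)*((-C)*x + (-S)*y))
    (hux1 : |ux| ≤ δ) (huy1 : |uy| ≤ δ)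
    (hQ : Q = k*P + A*((50*L+7*α)*M^2) + α*A)
    (hV : (ux^2+(ux+k*x)^2+2*(A*(α-1))*x^2) + (uy^2+(uy+k*y)^2+2*(A*(α-1))*y^2) = δ^2)
    (hT : (2*Q+2*(1+k*M)*(Q+k*P)+4*(A*(α-1))*M*P) * (3+2*k^2/(A*(α-1))) * δ < k)
    (ux' uy' : ℝ)
    (hux' : ux' = (A*((x-c)*H) - k*vx) + A*c + α*A*(C*x+S*y) + (α*A*ε/2)*(S*vx - C*vy))
    (huy' : uy' = (A*((y-s)*H) - k*vy) + A*s + α*A*(S*x-C*y) - (α*A*ε/2)*(C*vx + S*vy)) :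
    (2*ux*ux' + 2*(ux+k*x)*(ux'+k*vx) + 4*(A*(α-1))*x*vx) +
    (2*uy*uy' + 2*(uy+k*y)*(uy'+k*vy) + 4*(A*(α-1))*y*vy) < 0 := by
  have hα0 : 0 < α := by linarith
  have hβ : 0 < A*(α-1) := mul_pos hA (by linarith)
  have hPpos : 0 < P := by rw [hP]; positivity
  have nS : |-S| ≤ 1 := by rwa [abs_neg]
  have nC : |-C| ≤ 1 := by rwa [abs_neg]
  have nc : |-c| ≤ 1 := by rwa [abs_neg]
  have hp1 : |vx - ux| ≤ P * δ^2 := by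
    have := p_bd A α ε x y s S (-C) hA hα0 hε (by linarith) (by linarith) hs hS nC
    rw [hux, abs_sub_comm, show vx + A*ε*s + (α*A*ε/2)*(S*x + (-C)*y) - vx
      = A*ε*s + (α*A*ε/2)*(S*x + (-C)*y) by ring]
    rw [hP]
    exact this.trans (by gcongr)
  have hp2 : |vy - uy| ≤ P * δ^2 := by
    have := p_bd A α ε x y (-c) (-C) (-S) hA hα0 hε (by linarith) (by linarith) nc nC nS
    rw [huy, abs_sub_comm, show vy + A*ε*(-c) + (α*A*ε/2)*((-C)*x + (-S)*y) - vy
      = A*ε*(-c) + (α*A*ε/2)*((-C)*x + (-S)*y) by ring]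
    rw [hP]
    exact this.trans (by gcongr)
  have r1 := rem_bd α L (M*δ) x y c s H x c hα0 hL hM hx hy hc hs hcs hx hc hH
  have r2 := rem_bd α L (M*δ) x y c s H y s hα0 hL hM hx hy hc hs hcs hy hs hH
  have hae : 0 ≤ α*A*ε/2 := by positivity
  have fin : (k*(P*δ^2) + A*((50*L+7*α)*(M*δ)^2)) + (α*A*ε/2)*(1*1+1*1) ≤ Q*δ^2 := by
    rw [hQ]
    have : α*A*ε ≤ α*A*δ^2 := by gcongr
    linarith
  have hq1 : |ux' + k*ux + (A*(α-1))*x| ≤ Q*δ^2 := by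
    have e : ux' + k*ux + (A*(α-1))*x
      = (-(k*(vx-ux)) + A*((x - c) * H - (x - c + 2*α*(x*c+y*s) * (-c))))
        + (α*A*ε/2)*(S*vx - C*vy) := by
      rw [hux', hC2, hS2]; ring
    rw [e]
    refine le_trans (add_bd (add_bd ?_ (mul_bd (self_bd hA.le) r1)) (mul_bd (self_bd hae)
      (sub_bd (mul_bd hS hvx) (mul_bd hC hvy)))) fin
    rw [abs_neg]; exact mul_bd (self_bd hk.le) hp1
  have hq2 : |uy' + k*uy + (A*(α-1))*y| ≤ Q*δ^2 := by
    have e : uy' + k*uy + (A*(α-1))*y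
      = (-(k*(vy-uy)) + A*((y - s) * H - (y - s + 2*α*(x*c+y*s) * (-s))))
        + (α*A*ε/2)*((-C)*vx + (-S)*vy) := by
      rw [huy', hC2, hS2]; linear_combination (-(2*A*α*y))*hcs
    rw [e]
    refine le_trans (add_bd (add_bd ?_ (mul_bd (self_bd hA.le) r2)) (mul_bd (self_bd hae)
      (add_bd (mul_bd nC hvx) (mul_bd nS hvy)))) fin
    rw [abs_neg]; exact mul_bd (self_bd hk.le) hp2
  have := decay k (A*(α-1)) δ M P Q ux uy x y (vx-ux) (vy-uy) _ _ hk hβ hδ hux1 hx hp1 hq1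
    huy1 hy hp2 hq2 hV hT
  convert this using 1
  ring

lemma sq_le_abs {a b : ℝ} (hb : 0 ≤ b) (h : a^2 ≤ b^2) : |a| ≤ b :=
  abs_le_of_sq_le_sq h hb

set_option maxHeartbeats 1000000 in
lemma invariance (A k α : ℝ) (hA : 0 < A) (hk : 0 < k) (hα : 1 < α) :
    ∃ r > (0 : ℝ), ∃ ω₀ > (0 : ℝ), ∀ ω : ℝ, ω₀ < ω →
      ∀ x vx y vy dx ax dy ay : ℝ → ℝ,
        (∀ t ≥ (0 : ℝ), HasDerivAt x (dx t) t ∧ HasDerivAt vx (ax t) t ∧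
          HasDerivAt y (dy t) t ∧ HasDerivAt vy (ay t) t) →
        (∀ t ≥ (0 : ℝ), |x t| ≤ 1/4 → |y t| ≤ 1/4 → |vx t| ≤ 1 → |vy t| ≤ 1 →
          dx t = vx t ∧
          ax t = A * (x t - Real.cos (ω * t)) /
                ((x t - Real.cos (ω * t)) ^ 2 + (y t - Real.sin (ω * t)) ^ 2) ^ α -
                  k * vx t ∧
          dy t = vy t ∧
          ay t = A * (y t - Real.sin (ω * t)) /
                ((x t - Real.cos (ω * t)) ^ 2 + (y t - Real.sin (ω * t)) ^ 2) ^ α -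
                  k * vy t) →
        Real.sqrt ((x 0) ^ 2 + (vx 0) ^ 2 + (y 0) ^ 2 + (vy 0) ^ 2) ≤ r →
        ∀ t ≥ (0 : ℝ), |x t| ≤ 1/4 ∧ |y t| ≤ 1/4 ∧ |vx t| ≤ 1 ∧ |vy t| ≤ 1 := by
  obtain ⟨L, hL, hLt⟩ := rpow_taylor α (by linarith)
  have hα0 : 0 < α := by linarith
  obtain ⟨β, hβdef⟩ : ∃ β, β = A*(α-1) := ⟨_, rfl⟩
  have hβ : 0 < β := by rw [hβdef]; exact mul_pos hA (by linarith)
  obtain ⟨M, hM, hMβ⟩ : ∃ M : ℝ, 1 ≤ M ∧ 1 ≤ 2*β*M^2 := by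
    refine ⟨1 + 1/(2*β), by linarith [show 0 < 1/(2*β) by positivity], ?_⟩
    have e : 2*β*(1+1/(2*β))^2 = 2*β + 2 + 1/(2*β) := by field_simp; ring
    rw [e]; linarith [show 0 < 1/(2*β) by positivity]
  obtain ⟨P, hP⟩ : ∃ P, P = A*(1+α) := ⟨_, rfl⟩
  have hP0 : 0 < P := by rw [hP]; positivity
  obtain ⟨Q, hQ⟩ : ∃ Q, Q = k*P + A*((50*L+7*α)*M^2) + α*A := ⟨_, rfl⟩
  have hQ0 : 0 < Q := by rw [hQ]; positivity
  obtain ⟨T, hT⟩ : ∃ T, T = (2*Q+2*(1+k*M)*(Q+k*P)+4*β*M*P) * (3+2*k^2/β) := ⟨_, rfl⟩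
  have hT0 : 0 < T := by rw [hT]; positivity
  obtain ⟨W, hW⟩ : ∃ W, W = 2*((1+P)^2+(1+P+k)^2+2*β) := ⟨_, rfl⟩
  have hW0 : 0 < W := by rw [hW]; positivity
  obtain ⟨Z, hZ⟩ : ∃ Z, Z = 4*M + 1 + P + T/k + W + 1 := ⟨_, rfl⟩
  have hTk : 0 < T/k := by positivity
  have hZ0 : 0 < Z := by rw [hZ]; positivity
  obtain ⟨δ, hδdef⟩ : ∃ δ, δ = 1/Z := ⟨_, rfl⟩
  have hδ : 0 < δ := by rw [hδdef]; positivity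
  have hZδ : δ * Z = 1 := by rw [hδdef]; field_simp
  have hsum : 4*(M*δ) + δ + P*δ + T/k*δ + W*δ + δ = 1 := by rw [← hZδ, hZ]; ring
  have q1 : 0 < M*δ := by positivity
  have q2 : 0 < P*δ := by positivity
  have q3 : 0 < T/k*δ := by positivity
  have q4 : 0 < W*δ := by positivity
  have hδ1 : δ ≤ 1 := by linarith
  have hMδ : M*δ ≤ 1/4 := by linarith
  have hδδ : δ^2 ≤ δ := by nlinarith
  have hPδ : δ + P*δ^2 ≤ 1 := by nlinarith
  have hTδ : T*δ < k := by
    have : T/k*δ < 1 := by linarith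
    have e : T*δ = k*(T/k*δ) := by field_simp
    rw [e]; nlinarith
  have hWδ : W*δ^2 ≤ 1 := by nlinarith
  refine ⟨δ^2, by positivity, 1/δ^2, by positivity, ?_⟩
  intro ω hω x vx y vy dx ax dy ay hder hbox hinit
  have hω0 : 0 < ω := lt_trans (by positivity) hω
  obtain ⟨ε, hεdef⟩ : ∃ ε, ε = 1/ω := ⟨_, rfl⟩
  have hε : 0 < ε := by rw [hεdef]; positivity
  have hεω : ε*ω = 1 := by rw [hεdef]; field_simp
  have hεδ : ε ≤ δ^2 := by
    rw [hεdef, div_le_iff₀ hω0]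
    rw [div_lt_iff₀ (by positivity)] at hω
    linarith
  -- new variables
  let ux : ℝ → ℝ := fun t => vx t + A*ε*sin (ω*t)
    + (α*A*ε/2)*(sin (2*(ω*t)) * x t + (-cos (2*(ω*t)))*y t)
  let uy : ℝ → ℝ := fun t => vy t + A*ε*(-cos (ω*t))
    + (α*A*ε/2)*((-cos (2*(ω*t))) * x t + (-sin (2*(ω*t)))*y t)
  let ux' : ℝ → ℝ := fun t => ax t + A*cos (ω*t)
    + α*A*(cos (2*(ω*t)) * x t + sin (2*(ω*t)) * y t)
    + (α*A*ε/2)*(sin (2*(ω*t)) * dx t - cos (2*(ω*t))*dy t)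
  let uy' : ℝ → ℝ := fun t => ay t + A*sin (ω*t)
    + α*A*(sin (2*(ω*t)) * x t - cos (2*(ω*t)) * y t)
    - (α*A*ε/2)*(cos (2*(ω*t)) * dx t + sin (2*(ω*t))*dy t)
  let V : ℝ → ℝ := fun t => ((ux t)^2+(ux t+k*x t)^2+2*β*(x t)^2)
    + ((uy t)^2+(uy t+k*y t)^2+2*β*(y t)^2)
  let V' : ℝ → ℝ := fun t =>
    (2*ux t*ux' t + 2*(ux t+k*x t)*(ux' t+k*dx t) + 4*β*x t*dx t) +
    (2*uy t*uy' t + 2*(uy t+k*y t)*(uy' t+k*dy t) + 4*β*y t*dy t)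
  have hlin : ∀ t, HasDerivAt (fun t : ℝ => ω*t) ω t := fun t => by
    simpa using (hasDerivAt_id t).const_mul ω
  have hlin2 : ∀ t, HasDerivAt (fun t : ℝ => 2*(ω*t)) (2*ω) t := fun t => (hlin t).const_mul 2
  have hdux : ∀ t ≥ (0:ℝ), HasDerivAt ux (ux' t) t := by
    intro t ht
    obtain ⟨h1, h2, h3, h4⟩ := hder t ht
    have := (h2.add ((hlin t).sin.const_mul (A*ε))).add
      ((((hlin2 t).sin.mul h1).add ((hlin2 t).cos.neg.mul h3)).const_mul (α*A*ε/2))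
    refine this.congr_deriv ?_
    simp only [ux', Pi.neg_apply]
    linear_combination (A*cos (ω*t) + α*A*(cos (2*(ω*t)) * x t + sin (2*(ω*t)) * y t)) * hεω
  have hduy : ∀ t ≥ (0:ℝ), HasDerivAt uy (uy' t) t := by
    intro t ht
    obtain ⟨h1, h2, h3, h4⟩ := hder t ht
    have := (h4.add ((hlin t).cos.neg.const_mul (A*ε))).add
      ((((hlin2 t).cos.neg.mul h1).add ((hlin2 t).sin.neg.mul h3)).const_mul (α*A*ε/2))
    refine this.congr_deriv ?_
    simp only [uy', Pi.neg_apply]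
    linear_combination (A*sin (ω*t) + α*A*(sin (2*(ω*t)) * x t - cos (2*(ω*t)) * y t)) * hεω
  have hdV : ∀ t ≥ (0:ℝ), HasDerivAt V (V' t) t := by
    intro t ht
    obtain ⟨h1, h2, h3, h4⟩ := hder t ht
    have hu := hdux t ht
    have hw := hduy t ht
    have := (((hu.pow 2).add ((hu.add (h1.const_mul k)).pow 2)).add
      ((h1.pow 2).const_mul (2*β))).add
      (((hw.pow 2).add ((hw.add (h3.const_mul k)).pow 2)).add
      ((h3.pow 2).const_mul (2*β)))
    refine this.congr_deriv ?_
    simp only [V', Pi.add_apply]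
    push_cast
    ring
  have hs1 : ∀ θ : ℝ, |sin θ| ≤ 1 := abs_sin_le_one
  have hc1 : ∀ θ : ℝ, |cos θ| ≤ 1 := abs_cos_le_one
  have ns1 : ∀ θ : ℝ, |-sin θ| ≤ 1 := fun θ => by rw [abs_neg]; exact hs1 θ
  have nc1 : ∀ θ : ℝ, |-cos θ| ≤ 1 := fun θ => by rw [abs_neg]; exact hc1 θ
  have hpx : ∀ t, |x t| ≤ 1 → |y t| ≤ 1 → |ux t - vx t| ≤ P*δ^2 := by
    intro t h1 h2
    have := p_bd A α ε (x t) (y t) (sin (ω*t)) (sin (2*(ω*t))) (-cos (2*(ω*t)))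
      hA hα0 hε h1 h2 (hs1 _) (hs1 _) (nc1 _)
    rw [hP, show ux t - vx t = A*ε*sin (ω*t)
      + (α*A*ε/2)*(sin (2*(ω*t)) * x t + (-cos (2*(ω*t)))*y t) by simp only [ux]; ring]
    exact this.trans (by gcongr)
  have hpy : ∀ t, |x t| ≤ 1 → |y t| ≤ 1 → |uy t - vy t| ≤ P*δ^2 := by
    intro t h1 h2
    have := p_bd A α ε (x t) (y t) (-cos (ω*t)) (-cos (2*(ω*t))) (-sin (2*(ω*t)))
      hA hα0 hε h1 h2 (nc1 _) (nc1 _) (ns1 _)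
    rw [hP, show uy t - vy t = A*ε*(-cos (ω*t))
      + (α*A*ε/2)*((-cos (2*(ω*t))) * x t + (-sin (2*(ω*t)))*y t) by simp only [uy]; ring]
    exact this.trans (by gcongr)
  have hbd : ∀ t, V t ≤ δ^2 → |x t| ≤ M*δ ∧ |y t| ≤ M*δ ∧ |ux t| ≤ δ ∧ |uy t| ≤ δ ∧
      |vx t| ≤ 1 ∧ |vy t| ≤ 1 := by
    intro t h
    simp only [V] at h
    have a1 := sq_nonneg (ux t)
    have a2 := sq_nonneg (uy t)
    have a3 := sq_nonneg (ux t + k*x t)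
    have a4 := sq_nonneg (uy t + k*y t)
    have a5 : 0 ≤ 2*β*(x t)^2 := by positivity
    have a6 : 0 ≤ 2*β*(y t)^2 := by positivity
    have key : ∀ z : ℝ, 2*β*z^2 ≤ δ^2 → |z| ≤ M*δ := by
      intro z hz
      apply sq_le_abs q1.le
      have : 2*β*z^2 ≤ 2*β*(M*δ)^2 := by nlinarith [sq_nonneg δ]
      exact le_of_mul_le_mul_left this (by positivity)
    have b1 := key (x t) (by linarith)
    have b2 := key (y t) (by linarith)
    have b3 : |ux t| ≤ δ := sq_le_abs hδ.le (by linarith)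
    have b4 : |uy t| ≤ δ := sq_le_abs hδ.le (by linarith)
    refine ⟨b1, b2, b3, b4, ?_, ?_⟩
    · have := sub_bd b3 (hpx t (by linarith) (by linarith))
      rw [sub_sub_cancel] at this; linarith
    · have := sub_bd b4 (hpy t (by linarith) (by linarith))
      rw [sub_sub_cancel] at this; linarith
  have hV0 : V 0 ≤ δ^2 := by
    have h0 : (x 0) ^ 2 + (vx 0) ^ 2 + (y 0) ^ 2 + (vy 0) ^ 2 ≤ (δ^2)^2 :=
      (Real.sqrt_le_left (by positivity)).1 hinit
    have i1 := sq_nonneg (x 0)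
    have i2 := sq_nonneg (y 0)
    have i3 := sq_nonneg (vx 0)
    have i4 := sq_nonneg (vy 0)
    have hδ2 : 0 ≤ δ^2 := by positivity
    have j1 : |x 0| ≤ δ^2 := sq_le_abs hδ2 (by linarith)
    have j2 : |y 0| ≤ δ^2 := sq_le_abs hδ2 (by linarith)
    have j3 : |vx 0| ≤ δ^2 := sq_le_abs hδ2 (by linarith)
    have j4 : |vy 0| ≤ δ^2 := sq_le_abs hδ2 (by linarith)
    have k1 : |ux 0| ≤ (1+P)*δ^2 := by
      have := add_bd j3 (hpx 0 (by linarith) (by linarith))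
      rw [add_sub_cancel] at this; linarith
    have k2 : |uy 0| ≤ (1+P)*δ^2 := by
      have := add_bd j4 (hpy 0 (by linarith) (by linarith))
      rw [add_sub_cancel] at this; linarith
    have k3 : |ux 0 + k*x 0| ≤ (1+P+k)*δ^2 :=
      (add_bd k1 (mul_bd (self_bd hk.le) j1)).trans (by linarith)
    have k4 : |uy 0 + k*y 0| ≤ (1+P+k)*δ^2 :=
      (add_bd k2 (mul_bd (self_bd hk.le) j2)).trans (by linarith)
    have s1 := sq_le_sq' (abs_le.1 k1).1 (abs_le.1 k1).2
    have s2 := sq_le_sq' (abs_le.1 k2).1 (abs_le.1 k2).2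
    have s3 := sq_le_sq' (abs_le.1 k3).1 (abs_le.1 k3).2
    have s4 := sq_le_sq' (abs_le.1 k4).1 (abs_le.1 k4).2
    have s5 := mul_le_mul_of_nonneg_left (sq_le_sq' (abs_le.1 j1).1 (abs_le.1 j1).2) hβ.le
    have s6 := mul_le_mul_of_nonneg_left (sq_le_sq' (abs_le.1 j2).1 (abs_le.1 j2).2) hβ.le
    have : V 0 ≤ (W*δ^2)*δ^2 := by
      rw [hW]; simp only [V]; linarith
    exact this.trans (by simpa using mul_le_mul_of_nonneg_right hWδ hδ2)
  have hVle : ∀ t ≥ (0:ℝ), V t ≤ δ^2 := by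
    intro t ht
    refine image_le_of_deriv_right_lt_deriv_boundary (f := V) (f' := V') (a := 0) (b := t)
      (B := fun _ => δ^2) (B' := fun _ => 0)
      (fun s hs => (hdV s hs.1).continuousAt.continuousWithinAt)
      (fun s hs => (hdV s hs.1).hasDerivWithinAt) hV0 (fun s => hasDerivAt_const _ _) ?_
      ⟨ht, le_rfl⟩
    intro τ hτ hVτ
    obtain ⟨b1, b2, b3, b4, b5, b6⟩ := hbd τ hVτ.le
    obtain ⟨e1, e2, e3, e4⟩ := hbox τ hτ.1 (by linarith) (by linarith) b5 b6
    have hcs : cos (ω*τ)^2 + sin (ω*τ)^2 = 1 := cos_sq_add_sin_sq _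
    have hD := denom_lb (x τ) (y τ) (cos (ω*τ)) (sin (ω*τ)) (by linarith) (by linarith) hcs
    have hH := hLt _ hD
    have key := boundary A k α L ε δ M P (x τ) (y τ) (vx τ) (vy τ) (cos (ω*τ)) (sin (ω*τ))
      (cos (2*(ω*τ))) (sin (2*(ω*τ))) _ hA hk hα hL hε hεδ hδ hMδ hP (hc1 _) (hs1 _) (hs1 _)
      (hc1 _) hcs (cos_two_mul _) (sin_two_mul _) b1 b2 b5 b6 hH (ux τ) (uy τ) Q rfl rfl b3 b4 hQ
      (by rw [← hβdef]; exact hVτ) (by rw [← hβdef, ← hT]; exact hTδ) (ux' τ) (uy' τ) ?_ ?_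
    · rw [← hβdef] at key
      simp only [V', e1, e3]
      exact key
    · simp only [ux', e1, e2, e3]
      rw [rpow_neg (by linarith)]
      ring
    · simp only [uy', e1, e4, e3]
      rw [rpow_neg (by linarith)]
      ring
  intro t ht
  obtain ⟨b1, b2, b3, b4, b5, b6⟩ := hbd t (hVle t ht)
  exact ⟨by linarith, by linarith, b5, b6⟩

noncomputable def clampR (ρ s : ℝ) : ℝ := max (-ρ) (min ρ s)

lemma clampR_bd (ρ s : ℝ) (hρ : 0 ≤ ρ) : |clampR ρ s| ≤ ρ := by
  rw [abs_le]; unfold clampR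
  exact ⟨le_max_left _ _, max_le (by linarith) (min_le_left _ _)⟩

lemma clampR_eq (ρ s : ℝ) (h : |s| ≤ ρ) : clampR ρ s = s := by
  rw [abs_le] at h
  unfold clampR
  rw [min_eq_right h.2, max_eq_right h.1]

lemma clampR_lip (ρ s t : ℝ) : |clampR ρ s - clampR ρ t| ≤ |s - t| := by
  unfold clampR
  refine (abs_max_sub_max_le_max _ _ _ _).trans ?_
  refine max_le (by simp) ((abs_min_sub_min_le_max _ _ _ _).trans (by simp))

/-- One component of the repulsive force. -/
noncomputable def forceC (A α w e x y c s : ℝ) : ℝ :=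
  A * ((w - e) * ((x-c)^2+(y-s)^2) ^ (-α))

lemma force_bd (A α w e x y c s : ℝ) (hA : 0 < A) (hα : 0 < α) (hw : |w| ≤ 1/4) (he : |e| ≤ 1)
    (hx : |x| ≤ 1/4) (hy : |y| ≤ 1/4) (hcs : c^2+s^2=1) :
    |forceC A α w e x y c s| ≤ A * (2 * (1/4:ℝ)^(-α)) := by
  have h1 : |w - e| ≤ 2 := (sub_bd hw he).trans (by norm_num)
  exact mul_bd (self_bd hA.le) (mul_bd h1 (rpow_bd α hα _ (denom_lb x y c s hx hy hcs)))

lemma force_lip (A α : ℝ) (hA : 0 < A) (hα : 0 < α) : ∃ K : ℝ, 0 ≤ K ∧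
    ∀ w w' e x x' y y' c s d : ℝ, |w| ≤ 1/4 → |w'| ≤ 1/4 → |e| ≤ 1 →
    |x| ≤ 1/4 → |y| ≤ 1/4 → |x'| ≤ 1/4 → |y'| ≤ 1/4 → |c| ≤ 1 → |s| ≤ 1 → c^2+s^2=1 →
    |w - w'| ≤ d → |x - x'| ≤ d → |y - y'| ≤ d →
    |forceC A α w e x y c s - forceC A α w' e x' y' c s| ≤ K * d := by
  obtain ⟨L, hL, h⟩ := rpow_lip α hα
  refine ⟨A * ((1/4:ℝ)^(-α) + 12 * L), by positivity, ?_⟩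
  intro w w' e x x' y y' c s d hw hw' he hx hy hx' hy' hc hs hcs hdw hdx hdy
  have D := denom_lb x y c s hx hy hcs
  have D' := denom_lb x' y' c s hx' hy' hcs
  have h1 := h _ _ D D'
  have hd0 : 0 ≤ d := (abs_nonneg _).trans hdw
  have h2 : |((x-c)^2+(y-s)^2) - ((x'-c)^2+(y'-s)^2)| ≤ 6 * d := by
    have e1 : ((x-c)^2+(y-s)^2) - ((x'-c)^2+(y'-s)^2)
      = (x-x')*((x+x')-2*c) + (y-y')*((y+y')-2*s) := by ring
    have t2 : |(2:ℝ)| ≤ 2 := by norm_num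
    rw [e1]
    refine (add_bd (mul_bd hdx (sub_bd (add_bd hx hx') (mul_bd t2 hc)))
      (mul_bd hdy (sub_bd (add_bd hy hy') (mul_bd t2 hs)))).trans ?_
    linarith
  have h3 := h1.trans (mul_le_mul_of_nonneg_left h2 hL)
  have hN := rpow_bd α hα _ D
  have hwe : |w' - e| ≤ 2 := (sub_bd hw' he).trans (by norm_num)
  unfold forceC
  set N := ((x-c)^2+(y-s)^2) ^ (-α)
  set N' := ((x'-c)^2+(y'-s)^2) ^ (-α)
  have e2 : A * ((w-e)*N) - A*((w'-e)*N') = A * ((w-w')*N + (w'-e)*(N-N')) := by ring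
  rw [e2]
  refine (mul_bd (self_bd hA.le) (add_bd (mul_bd hdw hN) (mul_bd hwe h3))).trans ?_
  apply le_of_eq; ring

lemma mod_exist (A k α ω : ℝ) (hA : 0 < A) (hk : 0 < k) (hα : 0 < α) (x0 vx0 y0 vy0 : ℝ) :
    ∃ x vx y vy : ℝ → ℝ, x 0 = x0 ∧ vx 0 = vx0 ∧ y 0 = y0 ∧ vy 0 = vy0 ∧
      ∀ t : ℝ, HasDerivAt x (clampR 1 (vx t)) t ∧
        HasDerivAt vx (forceC A α (clampR (1/4) (x t)) (cos (ω*t)) (clampR (1/4) (x t))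
          (clampR (1/4) (y t)) (cos (ω*t)) (sin (ω*t)) - k * clampR 1 (vx t)) t ∧
        HasDerivAt y (clampR 1 (vy t)) t ∧
        HasDerivAt vy (forceC A α (clampR (1/4) (y t)) (sin (ω*t)) (clampR (1/4) (x t))
          (clampR (1/4) (y t)) (cos (ω*t)) (sin (ω*t)) - k * clampR 1 (vy t)) t := by
  let f : ℝ → (ℝ × ℝ × ℝ × ℝ) → (ℝ × ℝ × ℝ × ℝ) := fun t X =>
    (clampR 1 X.2.1,
     forceC A α (clampR (1/4) X.1) (cos (ω*t)) (clampR (1/4) X.1)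
          (clampR (1/4) X.2.2.1) (cos (ω*t)) (sin (ω*t)) - k * clampR 1 X.2.1,
     clampR 1 X.2.2.2,
     forceC A α (clampR (1/4) X.2.2.1) (sin (ω*t)) (clampR (1/4) X.1)
          (clampR (1/4) X.2.2.1) (cos (ω*t)) (sin (ω*t)) - k * clampR 1 X.2.2.2)
  obtain ⟨K, hK, hlip⟩ := force_lip A α hA hα
  have hq : ∀ z, |clampR (1/4) z| ≤ 1/4 := fun z => clampR_bd _ _ (by norm_num)
  have h1 : ∀ z, |clampR 1 z| ≤ 1 := fun z => clampR_bd _ _ (by norm_num)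
  have hsn : ∀ θ : ℝ, |sin θ| ≤ 1 := abs_sin_le_one
  have hcn : ∀ θ : ℝ, |cos θ| ≤ 1 := abs_cos_le_one
  have hcs : ∀ θ : ℝ, cos θ ^ 2 + sin θ ^ 2 = 1 := cos_sq_add_sin_sq
  have hkk := self_bd hk.le
  have g1 : ∀ t, LipschitzWith (Real.toNNReal (1 + K + k)) (f t) := by
    intro t
    refine LipschitzWith.of_dist_le_mul fun X Y => ?_
    rw [Real.coe_toNNReal _ (by positivity)]
    set d := dist X Y with hd
    have hd0 : 0 ≤ d := dist_nonneg
    have d1 : |X.1 - Y.1| ≤ d := by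
      rw [hd, Prod.dist_eq]; exact le_max_left _ _
    have d2' : dist X.2 Y.2 ≤ d := by
      rw [hd, Prod.dist_eq]; exact le_max_right _ _
    have d2 : |X.2.1 - Y.2.1| ≤ d := by
      refine le_trans ?_ d2'
      rw [Prod.dist_eq]; exact le_max_left _ _
    have d3' : dist X.2.2 Y.2.2 ≤ d := by
      refine le_trans ?_ d2'
      rw [Prod.dist_eq]; exact le_max_right _ _
    have d3 : |X.2.2.1 - Y.2.2.1| ≤ d := by
      refine le_trans ?_ d3'
      rw [Prod.dist_eq]; exact le_max_left _ _
    have d4 : |X.2.2.2 - Y.2.2.2| ≤ d := by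
      refine le_trans ?_ d3'
      rw [Prod.dist_eq]; exact le_max_right _ _
    have c1 := (clampR_lip (1/4) X.1 Y.1).trans d1
    have c2 := (clampR_lip 1 X.2.1 Y.2.1).trans d2
    have c3 := (clampR_lip (1/4) X.2.2.1 Y.2.2.1).trans d3
    have c4 := (clampR_lip 1 X.2.2.2 Y.2.2.2).trans d4
    have hKd : 0 ≤ K * d := by positivity
    have hkd : 0 ≤ k * d := by positivity
    have l1 := hlip _ _ (cos (ω*t)) _ _ _ _ (cos (ω*t)) (sin (ω*t)) d (hq X.1) (hq Y.1) (hcn _)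
      (hq X.1) (hq X.2.2.1) (hq Y.1) (hq Y.2.2.1) (hcn _) (hsn _) (hcs _) c1 c1 c3
    have l2 := hlip _ _ (sin (ω*t)) _ _ _ _ (cos (ω*t)) (sin (ω*t)) d (hq X.2.2.1) (hq Y.2.2.1)
      (hsn _) (hq X.1) (hq X.2.2.1) (hq Y.1) (hq Y.2.2.1) (hcn _) (hsn _) (hcs _) c3 c1 c3
    have comb : ∀ a a' b b' : ℝ, |a - a'| ≤ K*d → |b - b'| ≤ d →
        |(a - k*b) - (a' - k*b')| ≤ (1+K+k)*d := by
      intro a a' b b' ha hb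
      rw [show (a - k*b) - (a' - k*b') = (a - a') - k*(b-b') by ring]
      exact (sub_bd ha (mul_bd hkk hb)).trans (by linarith)
    rw [Prod.dist_eq, Prod.dist_eq, Prod.dist_eq]
    refine max_le ?_ (max_le ?_ (max_le ?_ ?_))
    · exact c2.trans (by linarith)
    · exact comb _ _ _ _ l1 c2
    · exact c4.trans (by linarith)
    · exact comb _ _ _ _ l2 c4
  have g2 : ∀ X, Continuous (fun t => f t X) := by
    intro X
    have hD : ∀ t, (clampR (1/4) X.1 - cos (ω*t))^2 + (clampR (1/4) X.2.2.1 - sin (ω*t))^2 ≠ 0 := by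
      intro t
      have := denom_lb _ _ (cos (ω*t)) (sin (ω*t)) (hq X.1) (hq X.2.2.1) (hcs _)
      linarith
    have hN : Continuous (fun t : ℝ => ((clampR (1/4) X.1 - cos (ω*t))^2
        + (clampR (1/4) X.2.2.1 - sin (ω*t))^2) ^ (-α)) :=
      Continuous.rpow_const (by fun_prop) (fun t => Or.inl (hD t))
    simp only [f, forceC]
    fun_prop
  have g3 : ∀ t X, ‖f t X‖ ≤ Real.toNNReal (1 + A * (2 * (1/4:ℝ)^(-α)) + k) := by
    intro t X
    rw [Real.coe_toNNReal _ (by positivity)]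
    set B := A * (2 * (1/4:ℝ)^(-α)) with hB
    have hB0 : 0 < B := by positivity
    have b1 := force_bd A α _ (cos (ω*t)) _ _ (cos (ω*t)) (sin (ω*t)) hA hα (hq X.1) (hcn _)
      (hq X.1) (hq X.2.2.1) (hcs _)
    have b2 := force_bd A α _ (sin (ω*t)) _ _ (cos (ω*t)) (sin (ω*t)) hA hα (hq X.2.2.1) (hsn _)
      (hq X.1) (hq X.2.2.1) (hcs _)
    rw [Prod.norm_def, Prod.norm_def, Prod.norm_def]
    refine max_le ?_ (max_le ?_ (max_le ?_ ?_))
    · exact (h1 _).trans (by linarith)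
    · exact (sub_bd b1 (mul_bd hkk (h1 _))).trans (by linarith)
    · exact (h1 _).trans (by linarith)
    · exact (sub_bd b2 (mul_bd hkk (h1 _))).trans (by linarith)
  obtain ⟨γ, hγ0, hγ⟩ := glob_exist f _ _ g1 g2 g3 (x0, vx0, y0, vy0)
  refine ⟨fun t => (γ t).1, fun t => (γ t).2.1, fun t => (γ t).2.2.1, fun t => (γ t).2.2.2,
    by simp [hγ0], by simp [hγ0], by simp [hγ0], by simp [hγ0], fun t => ?_⟩
  have h := hγ t
  exact ⟨h.fst, h.snd.fst, h.snd.snd.fst, h.snd.snd.snd⟩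

theorem high_frequency_circular_leader_confines_follower
    (A k α : ℝ) (hA : 0 < A) (hk : 0 < k) (hα : 1 < α) :
    ∃ r > (0 : ℝ), ∃ ω₀ > (0 : ℝ), ∀ ω : ℝ, ω₀ < ω →
      -- solutions exist (are defined) for all t ≥ 0
      ((∀ x0 vx0 y0 vy0 : ℝ,
          Real.sqrt (x0 ^ 2 + vx0 ^ 2 + y0 ^ 2 + vy0 ^ 2) ≤ r →
          ∃ x vx y vy : ℝ → ℝ,
            x 0 = x0 ∧ vx 0 = vx0 ∧ y 0 = y0 ∧ vy 0 = vy0 ∧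
            ∀ t ≥ (0 : ℝ),
              HasDerivAt x (vx t) t ∧
              HasDerivAt vx
                (A * (x t - Real.cos (ω * t)) /
                  ((x t - Real.cos (ω * t)) ^ 2 + (y t - Real.sin (ω * t)) ^ 2) ^ α -
                    k * vx t) t ∧
              HasDerivAt y (vy t) t ∧
              HasDerivAt vy
                (A * (y t - Real.sin (ω * t)) /
                  ((x t - Real.cos (ω * t)) ^ 2 + (y t - Real.sin (ω * t)) ^ 2) ^ α -
                    k * vy t) t) ∧
      -- every global solution starting with ‖X(0)‖ ≤ r stays within the unit disc
      (∀ x vx y vy : ℝ → ℝ,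
          (∀ t ≥ (0 : ℝ),
            HasDerivAt x (vx t) t ∧
            HasDerivAt vx
              (A * (x t - Real.cos (ω * t)) /
                ((x t - Real.cos (ω * t)) ^ 2 + (y t - Real.sin (ω * t)) ^ 2) ^ α -
                  k * vx t) t ∧
            HasDerivAt y (vy t) t ∧
            HasDerivAt vy
              (A * (y t - Real.sin (ω * t)) /
                ((x t - Real.cos (ω * t)) ^ 2 + (y t - Real.sin (ω * t)) ^ 2) ^ α -
                  k * vy t) t) →
          Real.sqrt ((x 0) ^ 2 + (vx 0) ^ 2 + (y 0) ^ 2 + (vy 0) ^ 2) ≤ r →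
          ∀ t ≥ (0 : ℝ), Real.sqrt ((x t) ^ 2 + (y t) ^ 2) < 1)) := by
  
  obtain ⟨r, hr, ω₀, hω₀, H⟩ := invariance A k α hA hk hα
  refine ⟨r, hr, ω₀, hω₀, fun ω hω => ⟨?_, ?_⟩⟩
  · intro x0 vx0 y0 vy0 h0
    obtain ⟨x, vx, y, vy, hx0, hvx0, hy0, hvy0, hd⟩ :=
      mod_exist A k α ω hA hk (by linarith) x0 vx0 y0 vy0
    have hbox : ∀ t ≥ (0 : ℝ), |x t| ≤ 1/4 → |y t| ≤ 1/4 → |vx t| ≤ 1 → |vy t| ≤ 1 →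
        clampR 1 (vx t) = vx t ∧
        forceC A α (clampR (1/4) (x t)) (cos (ω*t)) (clampR (1/4) (x t))
          (clampR (1/4) (y t)) (cos (ω*t)) (sin (ω*t)) - k * clampR 1 (vx t)
          = A * (x t - Real.cos (ω * t)) /
                ((x t - Real.cos (ω * t)) ^ 2 + (y t - Real.sin (ω * t)) ^ 2) ^ α -
                  k * vx t ∧
        clampR 1 (vy t) = vy t ∧
        forceC A α (clampR (1/4) (y t)) (sin (ω*t)) (clampR (1/4) (x t))
          (clampR (1/4) (y t)) (cos (ω*t)) (sin (ω*t)) - k * clampR 1 (vy t)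
          = A * (y t - Real.sin (ω * t)) /
                ((x t - Real.cos (ω * t)) ^ 2 + (y t - Real.sin (ω * t)) ^ 2) ^ α -
                  k * vy t := by
      intro t _ a1 a2 a3 a4
      rw [clampR_eq _ _ a1, clampR_eq _ _ a2, clampR_eq _ _ a3, clampR_eq _ _ a4]
      refine ⟨rfl, ?_, rfl, ?_⟩ <;>
      · unfold forceC
        rw [rpow_neg (by positivity)]
        ring
    have hin := H ω hω x vx y vy _ _ _ _ (fun t _ => hd t) hbox
      (by rw [hx0, hvx0, hy0, hvy0]; exact h0)
    refine ⟨x, vx, y, vy, hx0, hvx0, hy0, hvy0, fun t ht => ?_⟩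
    obtain ⟨a1, a2, a3, a4⟩ := hin t ht
    obtain ⟨e1, e2, e3, e4⟩ := hbox t ht a1 a2 a3 a4
    obtain ⟨d1, d2, d3, d4⟩ := hd t
    exact ⟨d1.congr_deriv e1, d2.congr_deriv e2, d3.congr_deriv e3, d4.congr_deriv e4⟩
  · intro x vx y vy hd h0 t ht
    obtain ⟨a1, a2, -, -⟩ := H ω hω x vx y vy _ _ _ _ hd
      (fun t _ _ _ _ _ => ⟨rfl, rfl, rfl, rfl⟩) h0 t ht
    have s1 := sq_le_sq' (abs_le.1 a1).1 (abs_le.1 a1).2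
    have s2 := sq_le_sq' (abs_le.1 a2).1 (abs_le.1 a2).2
    rw [Real.sqrt_lt' one_pos]
    linarith
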